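/- (Bounded average second moment of gradients, nonconvex case.) Under the hypotheses of Theorem 2 (filtration, update X_{k+1} = X_k − α·G_k with 0 < α ≤ ζ₁/(γ̂·Q_m), V γ̂-smooth and bounded below by V_inf, conditional bounds ⟨∇V(X_k), E[G_k | ℱ_k]⟩ ≥ ζ₁‖∇V(X_k)‖² and E[‖G_k‖² | ℱ_k] ≤ Q + Q_m‖∇V(X_k)‖² with ζ₁ > 0, Q ≥ 0, Q_m ≥ ζ₁²), one has limsup_{m→∞} (1/m)·Σ_{k=1}^{m} E[‖∇V(X_k)‖²] ≤ γ̂·α·Q/ζ₁. -/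

import Mathlib

open MeasureTheory Filter
open scoped RealInnerProductSpace BigOperators

/-!
Smoothness of `V` gives `V (X - α G) ≤ V X - α ⟪∇V X, G⟫ + (γ̂ / 2) α² ‖G‖²`. Taking expectations,
the two conditional bounds and the step-size restriction `α γ̂ Q_m ≤ ζ₁` turn this into
`E V (X_{k+1}) ≤ E V (X_k) - (α ζ₁ / 2) E ‖∇V (X_k)‖² + (γ̂ / 2) α² Q`. Since `E V (X_k)` is bounded
below, telescoping bounds the average of `E ‖∇V (X_k)‖²` by `γ̂ α Q / ζ₁ + O(1 / m)`.
-/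

open scoped NNReal

section Smooth

variable {E : Type*} [NormedAddCommGroup E] [InnerProductSpace ℝ E]

theorem hasDerivAt_comp_add_smul [CompleteSpace E] {V : E → ℝ} (hV : Differentiable ℝ V)
    (x d : E) (t : ℝ) :
    HasDerivAt (fun s : ℝ ↦ V (x + s • d)) ⟪gradient V (x + t • d), d⟫ t := by
  have hline : HasDerivAt (fun s : ℝ ↦ x + s • d) d t := by
    simpa only [id, one_smul] using ((hasDerivAt_id t).smul_const d).const_add x
  rw [inner_gradient_left]
  exact (hV (x + t • d)).hasFDerivAt.comp_hasDerivAt t hline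

theorem norm_inner_sub_le_of_lipschitzWith {K : ℝ≥0} {f : E → E} (hf : LipschitzWith K f)
    (x d : E) {t : ℝ} (ht : 0 ≤ t) :
    ‖⟪f (x + t • d) - f x, d⟫‖ ≤ K * t * ‖d‖ ^ 2 :=
  calc ‖⟪f (x + t • d) - f x, d⟫‖
    _ ≤ ‖f (x + t • d) - f x‖ * ‖d‖ := norm_inner_le_norm _ _
    _ ≤ K * ‖x + t • d - x‖ * ‖d‖ := by gcongr; exact hf.norm_sub_le _ _
    _ = K * t * ‖d‖ ^ 2 := by
      rw [add_sub_cancel_left, norm_smul, Real.norm_of_nonneg ht]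
      ring

theorem norm_sub_sub_inner_gradient_le [CompleteSpace E] {V : E → ℝ} {K : ℝ≥0}
    (hV : Differentiable ℝ V) (hK : LipschitzWith K (gradient V)) (x d : E) :
    ‖V (x + d) - V x - ⟪gradient V x, d⟫‖ ≤ K / 2 * ‖d‖ ^ 2 := by
  have hremainder (t : ℝ) :
      HasDerivAt (fun s : ℝ ↦ V (x + s • d) - V x - s * ⟪gradient V x, d⟫)
        ⟪gradient V (x + t • d) - gradient V x, d⟫ t :=
    (((hasDerivAt_comp_add_smul hV x d t).sub_const (V x)).sub
      ((hasDerivAt_id t).mul_const _)).congr_deriv (by rw [one_mul, inner_sub_left])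
  have hquadratic (t : ℝ) :
      HasDerivAt (fun s : ℝ ↦ K / 2 * s ^ 2 * ‖d‖ ^ 2) (K * t * ‖d‖ ^ 2) t :=
    (((hasDerivAt_pow 2 t).const_mul (K / 2 : ℝ)).mul_const _).congr_deriv
      (by push_cast; ring)
  have hle := image_norm_le_of_norm_deriv_right_le_deriv_boundary (a := 0) (b := 1)
    (fun t _ ↦ (hremainder t).continuousAt.continuousWithinAt)
    (fun t _ ↦ (hremainder t).hasDerivWithinAt) (by simp) hquadratic
    (fun t ht ↦ norm_inner_sub_le_of_lipschitzWith hK x d ht.1)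
    (Set.right_mem_Icc.2 zero_le_one)
  simpa only [one_smul, one_mul, one_pow, mul_one] using hle

theorem le_sub_inner_gradient_add_sq [CompleteSpace E] {V : E → ℝ} {K : ℝ≥0}
    (hV : Differentiable ℝ V) (hK : LipschitzWith K (gradient V)) (x g : E) (α : ℝ) :
    V (x - α • g) ≤ V x - α * ⟪gradient V x, g⟫ + K / 2 * α ^ 2 * ‖g‖ ^ 2 := by
  have h := (le_abs_self _).trans (norm_sub_sub_inner_gradient_le hV hK x (-(α • g)))
  rw [← sub_eq_add_neg, inner_neg_right, real_inner_smul_right, norm_neg, norm_smul, mul_pow,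
    Real.norm_eq_abs, sq_abs] at h
  linarith

end Smooth

section Integrability

variable {Ω E : Type*} [NormedAddCommGroup E] {m0 : MeasurableSpace Ω} {P : Measure Ω}

theorem memLp_comp_of_lipschitzWith {F : Type*} [NormedAddCommGroup F] [IsFiniteMeasure P]
    {K : ℝ≥0} {f : E → F} (hf : LipschitzWith K f) {p : ENNReal} {X : Ω → E} (hX : MemLp X p P) :
    MemLp (fun ω ↦ f (X ω)) p P := by
  have hsub : LipschitzWith K fun x ↦ f x - f 0 :=
    LipschitzWith.of_dist_le_mul fun x y ↦ by
      simpa only [dist_sub_right] using hf.dist_le_mul x y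
  have hadd := (hsub.comp_memLp (sub_self _) hX).add (memLp_const (f 0))
  exact hadd.congr_norm (hf.continuous.comp_aestronglyMeasurable hX.1) (by simp)

variable [InnerProductSpace ℝ E]

theorem integrable_inner_of_memLp_two {f g : Ω → E} (hf : MemLp f 2 P) (hg : MemLp g 2 P) :
    Integrable (fun ω ↦ ⟪f ω, g ω⟫) P :=
  memLp_one_iff_integrable.1 ((innerSL ℝ).memLp_of_bilin 1 hf hg)

theorem integrable_comp_of_lipschitzWith_gradient [CompleteSpace E] [IsFiniteMeasure P]
    {V : E → ℝ} {K : ℝ≥0} (hV : Differentiable ℝ V) (hK : LipschitzWith K (gradient V))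
    {X : Ω → E} (hX : MemLp X 2 P) :
    Integrable (fun ω ↦ V (X ω)) P := by
  have hlinear : Integrable (fun ω ↦ V 0 + ⟪gradient V 0, X ω⟫) P :=
    (integrable_const _).add (integrable_inner_of_memLp_two (memLp_const _) hX)
  have hVX : AEStronglyMeasurable (fun ω ↦ V (X ω)) P :=
    hV.continuous.comp_aestronglyMeasurable hX.1
  have hremainder : Integrable (fun ω ↦ V (X ω) - (V 0 + ⟪gradient V 0, X ω⟫)) P := by
    refine ((hX.integrable_norm_pow two_ne_zero).const_mul (K / 2 : ℝ)).mono'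
      (hVX.sub hlinear.1) (ae_of_all _ fun ω ↦ ?_)
    simpa only [zero_add, sub_sub] using norm_sub_sub_inner_gradient_le hV hK 0 (X ω)
  exact (hremainder.add hlinear).congr (ae_of_all _ fun ω ↦ sub_add_cancel _ _)

end Integrability

section ConditionalBounds

variable {Ω : Type*} {m m0 : MeasurableSpace Ω} {P : Measure Ω} [IsFiniteMeasure P]

theorem integral_le_of_condExp_le (hm : m ≤ m0) {f g : Ω → ℝ} (hg : Integrable g P)
    (h : ∀ᵐ ω ∂P, (P[f | m]) ω ≤ g ω) : ∫ ω, f ω ∂P ≤ ∫ ω, g ω ∂P := by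
  rw [← integral_condExp hm]
  exact integral_mono_ae integrable_condExp hg h

theorem integral_le_integral_inner_of_le_inner_condExp {E : Type*} [NormedAddCommGroup E]
    [InnerProductSpace ℝ E] [CompleteSpace E] (hm : m ≤ m0) {f : Ω → ℝ} (hf : Integrable f P)
    {Y G : Ω → E} (hYm : AEStronglyMeasurable[m] Y P) (hY : MemLp Y 2 P) (hG : MemLp G 2 P)
    (h : ∀ᵐ ω ∂P, f ω ≤ ⟪Y ω, (P[G | m]) ω⟫) :
    ∫ ω, f ω ∂P ≤ ∫ ω, ⟪Y ω, G ω⟫ ∂P := by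
  have hpull : P[fun ω ↦ ⟪Y ω, G ω⟫ | m] =ᵐ[P] fun ω ↦ ⟪Y ω, (P[G | m]) ω⟫ :=
    condExp_bilin_of_aestronglyMeasurable_left (innerSL ℝ) hYm
      (integrable_inner_of_memLp_two hY hG) (hG.integrable one_le_two)
  rw [← integral_condExp (f := fun ω ↦ ⟪Y ω, G ω⟫) hm]
  refine integral_mono_ae hf integrable_condExp ?_
  filter_upwards [h, hpull] with ω hω hpullω
  exact hω.trans_eq hpullω.symm

end ConditionalBounds

section ExpectedDescent

variable {Ω E : Type*} [NormedAddCommGroup E] [InnerProductSpace ℝ E] [CompleteSpace E]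
  {m m0 : MeasurableSpace Ω} {P : Measure Ω} {V : E → ℝ} {K : ℝ≥0} {X G : Ω → E}

theorem integral_comp_sub_smul_le [IsFiniteMeasure P] (hV : Differentiable ℝ V)
    (hK : LipschitzWith K (gradient V)) (hX : MemLp X 2 P) (hG : MemLp G 2 P) (α : ℝ) :
    ∫ ω, V (X ω - α • G ω) ∂P ≤ ∫ ω, V (X ω) ∂P - α * ∫ ω, ⟪gradient V (X ω), G ω⟫ ∂P
      + K / 2 * α ^ 2 * ∫ ω, ‖G ω‖ ^ 2 ∂P := by
  have hVX := integrable_comp_of_lipschitzWith_gradient hV hK hX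
  have hVX' := integrable_comp_of_lipschitzWith_gradient hV hK (hX.sub (hG.const_smul α))
  have hinner :=
    (integrable_inner_of_memLp_two (memLp_comp_of_lipschitzWith hK hX) hG).const_mul α
  have hlinear : Integrable (fun ω ↦ V (X ω) - α * ⟪gradient V (X ω), G ω⟫) P := hVX.sub hinner
  have hsq := (hG.integrable_norm_pow two_ne_zero).const_mul (K / 2 * α ^ 2)
  calc ∫ ω, V (X ω - α • G ω) ∂P
    _ ≤ ∫ ω, (V (X ω) - α * ⟪gradient V (X ω), G ω⟫ + K / 2 * α ^ 2 * ‖G ω‖ ^ 2) ∂P :=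
      integral_mono hVX' (hlinear.add hsq)
        fun ω ↦ le_sub_inner_gradient_add_sq hV hK (X ω) (G ω) α
    _ = _ := by
      rw [integral_add hlinear hsq, integral_sub hVX hinner, integral_const_mul,
        integral_const_mul]

theorem integral_comp_sub_smul_le_of_condExp_bounds [IsProbabilityMeasure P]
    (hV : Differentiable ℝ V) (hK : LipschitzWith K (gradient V)) (hm : m ≤ m0)
    (hXm : AEStronglyMeasurable[m] X P) (hX : MemLp X 2 P) (hG : MemLp G 2 P)
    {α ζ Q Qm : ℝ} (hα : 0 ≤ α) (hαle : α * (K * Qm) ≤ ζ)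
    (hinner : ∀ᵐ ω ∂P, ζ * ‖gradient V (X ω)‖ ^ 2 ≤ ⟪gradient V (X ω), (P[G | m]) ω⟫)
    (hsecond : ∀ᵐ ω ∂P,
      (P[fun ω' ↦ ‖G ω'‖ ^ 2 | m]) ω ≤ Q + Qm * ‖gradient V (X ω)‖ ^ 2) :
    ∫ ω, V (X ω - α • G ω) ∂P ≤ ∫ ω, V (X ω) ∂P
      - α * ζ / 2 * ∫ ω, ‖gradient V (X ω)‖ ^ 2 ∂P + K / 2 * α ^ 2 * Q := by
  set e := ∫ ω, ‖gradient V (X ω)‖ ^ 2 ∂P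
  have hgrad : MemLp (fun ω ↦ gradient V (X ω)) 2 P := memLp_comp_of_lipschitzWith hK hX
  have hgradsq := hgrad.integrable_norm_pow two_ne_zero
  have : 0 ≤ e := integral_nonneg fun ω ↦ sq_nonneg _
  have hfirst : ζ * e ≤ ∫ ω, ⟪gradient V (X ω), G ω⟫ ∂P := by
    rw [← integral_const_mul]
    exact integral_le_integral_inner_of_le_inner_condExp hm (hgradsq.const_mul ζ)
      (hK.continuous.comp_aestronglyMeasurable hXm) hgrad hG hinner
  have hmoment : ∫ ω, ‖G ω‖ ^ 2 ∂P ≤ Q + Qm * e := by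
    refine (integral_le_of_condExp_le hm
      ((integrable_const Q).add (hgradsq.const_mul Qm)) hsecond).trans_eq ?_
    simp only [Pi.add_apply]
    rw [integral_add (integrable_const _) (hgradsq.const_mul _), integral_const_mul,
      integral_const, probReal_univ, one_smul]
  calc ∫ ω, V (X ω - α • G ω) ∂P
    _ ≤ ∫ ω, V (X ω) ∂P - α * ∫ ω, ⟪gradient V (X ω), G ω⟫ ∂P
        + K / 2 * α ^ 2 * ∫ ω, ‖G ω‖ ^ 2 ∂P := integral_comp_sub_smul_le hV hK hX hG α
    _ ≤ ∫ ω, V (X ω) ∂P - α * (ζ * e) + K / 2 * α ^ 2 * (Q + Qm * e) := by gcongr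
    _ = ∫ ω, V (X ω) ∂P - α * ζ * e + α / 2 * (α * (K * Qm)) * e + K / 2 * α ^ 2 * Q := by ring
    _ ≤ ∫ ω, V (X ω) ∂P - α * ζ * e + α / 2 * ζ * e + K / 2 * α ^ 2 * Q := by gcongr
    _ = ∫ ω, V (X ω) ∂P - α * ζ / 2 * e + K / 2 * α ^ 2 * Q := by ring

end ExpectedDescent

section Averages

variable {v e : ℕ → ℝ} {c b vinf : ℝ}

theorem average_le_of_descent (hc : 0 < c) (hv : ∀ k, 1 ≤ k → vinf ≤ v k)
    (hdescent : ∀ k, 1 ≤ k → v (k + 1) ≤ v k - c * e k + c * b) {m : ℕ} (hm : 1 ≤ m) :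
    (1 / (m : ℝ)) * ∑ k ∈ Finset.Icc 1 m, e k ≤ (v 1 - vinf) / c / m + b := by
  have : (0 : ℝ) < m := by exact_mod_cast hm
  have htelescope : ∑ k ∈ Finset.Icc 1 m, (e k - b) ≤ (v 1 - vinf) / c :=
    calc ∑ k ∈ Finset.Icc 1 m, (e k - b)
      _ ≤ ∑ k ∈ Finset.Icc 1 m, -(v (k + 1) - v k) / c := by
        refine Finset.sum_le_sum fun k hk ↦ (le_div_iff₀ hc).2 ?_
        linarith [hdescent k (Finset.mem_Icc.1 hk).1]
      _ = (v 1 - v (m + 1)) / c := by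
        rw [← Finset.sum_div, Finset.sum_neg_distrib, Finset.sum_Icc_sub hm, neg_sub]
      _ ≤ (v 1 - vinf) / c := by
        gcongr
        exact hv (m + 1) (Nat.le_add_left 1 m)
  rw [Finset.sum_sub_distrib, Finset.sum_const, Nat.card_Icc, Nat.add_sub_cancel, nsmul_eq_mul]
    at htelescope
  calc (1 / (m : ℝ)) * ∑ k ∈ Finset.Icc 1 m, e k
    _ ≤ (1 / (m : ℝ)) * ((v 1 - vinf) / c + m * b) := by gcongr; linarith
    _ = (v 1 - vinf) / c / m + b := by field_simp

theorem limsup_average_le_of_descent (hc : 0 < c) (he : ∀ k, 0 ≤ e k)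
    (hv : ∀ k, 1 ≤ k → vinf ≤ v k)
    (hdescent : ∀ k, 1 ≤ k → v (k + 1) ≤ v k - c * e k + c * b) :
    limsup (fun m : ℕ ↦ (1 / (m : ℝ)) * ∑ k ∈ Finset.Icc 1 m, e k) atTop ≤ b := by
  have hlim : Tendsto (fun m : ℕ ↦ (v 1 - vinf) / c / m + b) atTop (nhds b) := by
    simpa only [zero_add] using (tendsto_const_div_atTop_nhds_zero_nat _).add_const b
  have hnonneg (m : ℕ) : 0 ≤ (1 / (m : ℝ)) * ∑ k ∈ Finset.Icc 1 m, e k :=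
    mul_nonneg (by positivity) (Finset.sum_nonneg fun k _ ↦ he k)
  rw [← hlim.limsup_eq]
  refine limsup_le_limsup ?_ (isCoboundedUnder_le_of_le atTop hnonneg) hlim.isBoundedUnder_le
  filter_upwards [eventually_ge_atTop 1] with m hm
  exact average_le_of_descent hc hv hdescent hm

end Averages

theorem memLp_of_update {Ω E : Type*} [NormedAddCommGroup E] [NormedSpace ℝ E]
    {m0 : MeasurableSpace Ω} {P : Measure Ω} {p : ENNReal} {X G : ℕ → Ω → E} {α : ℝ}
    (hX1 : MemLp (X 1) p P) (hG : ∀ k, 1 ≤ k → MemLp (G k) p P)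
    (hupdate : ∀ k, 1 ≤ k → ∀ᵐ ω ∂P, X (k + 1) ω = X k ω - α • G k ω) {k : ℕ} (hk : 1 ≤ k) :
    MemLp (X k) p P := by
  induction k, hk using Nat.le_induction with
  | base => exact hX1
  | succ k hk ih => exact (memLp_congr_ae (hupdate k hk)).2 (ih.sub ((hG k hk).const_smul α))

theorem cdsgd_fixed_step_nonconvex_average_bound_general {Ω E : Type*} [NormedAddCommGroup E]
    [InnerProductSpace ℝ E] [CompleteSpace E] {m0 : MeasurableSpace Ω}
    (P : Measure Ω) [IsProbabilityMeasure P] (ℱ : ℕ → MeasurableSpace Ω)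
    (hℱ : ∀ k, 1 ≤ k → ℱ k ≤ m0) (V : E → ℝ) (K : ℝ≥0) (hV : Differentiable ℝ V)
    (hK : LipschitzWith K (gradient V)) (Vinf : ℝ) (hVinf : ∀ x, Vinf ≤ V x)
    (X G : ℕ → Ω → E) (α ζ Q Qm : ℝ) (hζ : 0 < ζ) (hα : 0 < α) (hαle : α * (K * Qm) ≤ ζ)
    (hX1 : MemLp (X 1) 2 P) (hXm : ∀ k, 1 ≤ k → AEStronglyMeasurable[ℱ k] (X k) P)
    (hG : ∀ k, 1 ≤ k → MemLp (G k) 2 P)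
    (hupdate : ∀ k, 1 ≤ k → ∀ᵐ ω ∂P, X (k + 1) ω = X k ω - α • G k ω)
    (hinner : ∀ k, 1 ≤ k → ∀ᵐ ω ∂P,
      ζ * ‖gradient V (X k ω)‖ ^ 2 ≤ ⟪gradient V (X k ω), (P[G k | ℱ k]) ω⟫)
    (hsecond : ∀ k, 1 ≤ k → ∀ᵐ ω ∂P,
      (P[fun ω' ↦ ‖G k ω'‖ ^ 2 | ℱ k]) ω ≤ Q + Qm * ‖gradient V (X k ω)‖ ^ 2) :
    limsup (fun m : ℕ ↦
        (1 / (m : ℝ)) * ∑ k ∈ Finset.Icc 1 m, ∫ ω, ‖gradient V (X k ω)‖ ^ 2 ∂P) atTop ≤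
      K * α * Q / ζ := by
  have hX {k : ℕ} (hk : 1 ≤ k) : MemLp (X k) 2 P := memLp_of_update hX1 hG hupdate hk
  refine limsup_average_le_of_descent (v := fun k ↦ ∫ ω, V (X k ω) ∂P) (c := α * ζ / 2)
    (vinf := Vinf) (by positivity) (fun k ↦ integral_nonneg fun ω ↦ sq_nonneg _)
    (fun k hk ↦ ?bounded_below) (fun k hk ↦ ?descent)
  case bounded_below =>
    simpa using integral_mono (μ := P) (integrable_const Vinf)
      (integrable_comp_of_lipschitzWith_gradient hV hK (hX hk)) fun ω ↦ hVinf (X k ω)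
  case descent =>
    have hnext : ∫ ω, V (X (k + 1) ω) ∂P = ∫ ω, V (X k ω - α • G k ω) ∂P :=
      integral_congr_ae ((hupdate k hk).mono fun ω hω ↦ congrArg V hω)
    have hconst : α * ζ / 2 * (K * α * Q / ζ) = K / 2 * α ^ 2 * Q := by field_simp
    rw [hnext, hconst]
    exact integral_comp_sub_smul_le_of_condExp_bounds hV hK (hℱ k hk) (hXm k hk) (hX hk)
      (hG k hk) hα.le hαle (hinner k hk) (hsecond k hk)

/-- Bounded average second moment of gradients (nonconvex case):
`limsup_{m→∞} (1/m)·Σ_{k=1}^{m} E[‖∇V(X_k)‖²] ≤ γ̂·α·Q/ζ₁`. -/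
theorem cdsgd_fixed_step_nonconvex_average_bound {N : ℕ} {Ω : Type*} {m0 : MeasurableSpace Ω}
    (P : Measure Ω) [IsProbabilityMeasure P] (ℱ : Filtration ℕ m0)
    (V : EuclideanSpace ℝ (Fin N) → ℝ) (γh : ℝ) (hγh : 0 < γh)
    (hdiff : Differentiable ℝ V)
    (hLip : LipschitzWith γh.toNNReal (gradient V))
    (Vinf : ℝ) (hbdd : ∀ x, Vinf ≤ V x)
    (x₁ : EuclideanSpace ℝ (Fin N))
    (X G : ℕ → Ω → EuclideanSpace ℝ (Fin N))
    (α ζ₁ Q Qm : ℝ) (hζ₁ : 0 < ζ₁) (hQ : 0 ≤ Q) (hQm : ζ₁ ^ 2 ≤ Qm)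
    (hα : 0 < α) (hαle : α ≤ ζ₁ / (γh * Qm))
    (hX1 : ∀ᵐ ω ∂P, X 1 ω = x₁)
    (hXmeas : ∀ k, StronglyMeasurable[ℱ k] (X k))
    (hGmeas : ∀ k, StronglyMeasurable[ℱ (k + 1)] (G k))
    (hGint : ∀ k, Integrable (fun ω => ‖G k ω‖ ^ 2) P)
    (hupdate : ∀ k, 1 ≤ k → ∀ ω, X (k + 1) ω = X k ω - α • G k ω)
    (hinner : ∀ k, 1 ≤ k → ∀ᵐ ω ∂P,
      ζ₁ * ‖gradient V (X k ω)‖ ^ 2 ≤ ⟪gradient V (X k ω), (P[G k|ℱ k]) ω⟫)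
    (hsecond : ∀ k, 1 ≤ k → ∀ᵐ ω ∂P,
      (P[(fun ω' => ‖G k ω'‖ ^ 2)|ℱ k]) ω ≤ Q + Qm * ‖gradient V (X k ω)‖ ^ 2) :
    Filter.limsup (fun m : ℕ =>
        (1 / (m : ℝ)) * ∑ k ∈ Finset.Icc 1 m, ∫ ω, ‖gradient V (X k ω)‖ ^ 2 ∂P) atTop ≤
      γh * α * Q / ζ₁ := by
  have hQm0 : 0 < Qm := (pow_pos hζ₁ 2).trans_le hQm
  have hG (k : ℕ) : MemLp (G k) 2 P :=
    (memLp_two_iff_integrable_sq_norm ((hGmeas k).mono (ℱ.le _)).aestronglyMeasurable).2 (hGint k)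
  lift γh to ℝ≥0 using hγh.le
  rw [Real.toNNReal_coe] at hLip
  exact cdsgd_fixed_step_nonconvex_average_bound_general P ℱ (fun k _ ↦ ℱ.le k) V γh hdiff hLip
    Vinf hbdd X G α ζ₁ Q Qm hζ₁ hα ((le_div_iff₀ (by positivity)).1 hαle)
    ((memLp_congr_ae hX1).2 (memLp_const x₁)) (fun k _ ↦ (hXmeas k).aestronglyMeasurable)
    (fun k _ ↦ hG k) (fun k hk ↦ ae_of_all _ (hupdate k hk)) hinner hsecond
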